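/- (Uniform-distribution accuracy bound.) Let A, Y, W be random variables on a finite probability space with values in finite sets, with A taking values in a finite set 𝒜 with |𝒜| ≥ 2. Let g be a function from the value set of Y into 𝒜, set Acc = 1 − P(g(Y) ≠ A), β = H(A | W) and C = H(Y | W). If β > 0 and log₂(|𝒜| − 1) ≤ β, then Acc ≤ min{ 1, (C + 1) / β }. -/

import Mathlib

open scoped Classical
open Finset

namespace InfoQA

variable {Ω : Type*} [Fintype Ω]

/-- Probability of an event under a pmf `p` on a finite sample space. -/
noncomputable def pr (p : Ω → ℝ) (S : Ω → Prop) : ℝ :=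
  ∑ ω, if S ω then p ω else 0

/-- Distribution of a random variable `X` under `p`. -/
noncomputable def distOf (p : Ω → ℝ) {α : Type*} (X : Ω → α) (a : α) : ℝ :=
  pr p (fun ω => X ω = a)

/-- Shannon entropy of a random variable (logarithm base 2). -/
noncomputable def H (p : Ω → ℝ) {α : Type*} [Fintype α] (X : Ω → α) : ℝ :=
  -∑ a, distOf p X a * Real.logb 2 (distOf p X a)

/-- Conditional entropy `H(X | Z) = H(X, Z) - H(Z)` (base 2). -/
noncomputable def condH (p : Ω → ℝ) {α β : Type*} [Fintype α] [Fintype β]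
    (X : Ω → α) (Z : Ω → β) : ℝ :=
  H p (fun ω => (X ω, Z ω)) - H p Z

/-- Conditional mutual information `I(X ; Y | Z) = H(X | Z) - H(X | (Y, Z))` (base 2). -/
noncomputable def condMI (p : Ω → ℝ) {α β γ : Type*} [Fintype α] [Fintype β] [Fintype γ]
    (X : Ω → α) (Y : Ω → β) (Z : Ω → γ) : ℝ :=
  condH p X Z - condH p X (fun ω => (Y ω, Z ω))

/-- Binary entropy function (base 2); `Real.logb 2 0 = 0`, so `binEnt 0 = binEnt 1 = 0`. -/
noncomputable def binEnt (x : ℝ) : ℝ :=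
  -(x * Real.logb 2 x) - (1 - x) * Real.logb 2 (1 - x)

end InfoQA

open InfoQA

namespace InfoQA

variable {Ω : Type*} [Fintype Ω] {p : Ω → ℝ}

lemma pr_nonneg (hp : ∀ ω, 0 ≤ p ω) (S : Ω → Prop) : 0 ≤ pr p S :=
  Finset.sum_nonneg fun ω _ => by split_ifs <;> simp [hp ω]

lemma pr_mono (hp : ∀ ω, 0 ≤ p ω) {S T : Ω → Prop} (h : ∀ ω, S ω → T ω) : pr p S ≤ pr p T := by
  refine Finset.sum_le_sum fun ω _ => ?_
  by_cases hS : S ω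
  · simp [hS, h ω hS]
  · rw [if_neg hS]
    split_ifs <;> simp [hp ω]

lemma distOf_nonneg (hp : ∀ ω, 0 ≤ p ω) {α : Type*} (X : Ω → α) (a : α) : 0 ≤ distOf p X a :=
  pr_nonneg hp _

lemma distOf_self_pos (hp : ∀ ω, 0 ≤ p ω) {α : Type*} (X : Ω → α) {ω : Ω} (hω : 0 < p ω) :
    0 < distOf p X (X ω) := by
  refine hω.trans_le ?_
  have h := Finset.single_le_sum (f := fun ω' => if X ω' = X ω then p ω' else 0)
    (fun ω' _ => by split_ifs <;> simp [hp ω']) (Finset.mem_univ ω)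
  simpa [distOf, pr] using h

/-- Change of variables: an expectation of `f (X ω)` is a sum against the law of `X`. -/
lemma sum_mul_comp_eq_sum_distOf_mul {α : Type*} [Fintype α] (X : Ω → α) (f : α → ℝ) :
    ∑ ω, p ω * f (X ω) = ∑ a, distOf p X a * f a := by
  simp only [distOf, pr, Finset.sum_mul]
  rw [Finset.sum_comm]
  refine Finset.sum_congr rfl fun ω _ => ?_
  simp [ite_mul]

lemma sum_distOf {α : Type*} [Fintype α] (X : Ω → α) : ∑ a, distOf p X a = ∑ ω, p ω := by
  simpa using (sum_mul_comp_eq_sum_distOf_mul (p := p) X fun _ => 1).symm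

lemma H_eq_neg_sum {α : Type*} [Fintype α] (X : Ω → α) :
    H p X = -∑ ω, p ω * Real.logb 2 (distOf p X (X ω)) := by
  rw [H, sum_mul_comp_eq_sum_distOf_mul X fun a => Real.logb 2 (distOf p X a)]

lemma H_comp_le (hp : ∀ ω, 0 ≤ p ω) {α β : Type*} [Fintype α] [Fintype β]
    (X : Ω → α) (f : α → β) : H p (fun ω => f (X ω)) ≤ H p X := by
  rw [H_eq_neg_sum, H_eq_neg_sum, neg_le_neg_iff]
  refine Finset.sum_le_sum fun ω _ => ?_
  rcases (hp ω).eq_or_lt with h | h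
  · simp [← h]
  · refine mul_le_mul_of_nonneg_left ?_ (hp ω)
    exact Real.logb_le_logb_of_le one_lt_two (distOf_self_pos hp X h)
      (pr_mono hp fun _ => congrArg f)

/-- Gibbs' inequality: entropy is at most the cross entropy with any subprobability `q`. -/
lemma H_le_cross_entropy (hp : ∀ ω, 0 ≤ p ω) (hsum : ∑ ω, p ω = 1) {α : Type*} [Fintype α]
    (X : Ω → α) (q : α → ℝ) (hq : ∀ a, 0 ≤ q a) (hq1 : ∑ a, q a ≤ 1)
    (hpos : ∀ ω, 0 < p ω → 0 < q (X ω)) :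
    H p X ≤ -∑ ω, p ω * Real.logb 2 (q (X ω)) := by
  rw [H_eq_neg_sum, neg_le_neg_iff, ← sub_nonpos, ← Finset.sum_sub_distrib]
  have hterm : ∀ ω, p ω * Real.logb 2 (q (X ω)) - p ω * Real.logb 2 (distOf p X (X ω)) ≤
      (p ω * (q (X ω) / distOf p X (X ω)) - p ω) / Real.log 2 := by
    intro ω
    rcases (hp ω).eq_or_lt with h | h
    · simp [← h]
    · have hd := distOf_self_pos hp X h
      have hlog := Real.log_le_sub_one_of_pos (div_pos (hpos ω h) hd)
      rw [Real.log_div (hpos ω h).ne' hd.ne'] at hlog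
      rw [← mul_sub, Real.logb, Real.logb, ← sub_div, ← mul_div_assoc, ← mul_sub_one]
      have := Real.log_pos one_lt_two
      gcongr
  have hratio : ∑ ω, p ω * (q (X ω) / distOf p X (X ω)) ≤ 1 := by
    rw [sum_mul_comp_eq_sum_distOf_mul X fun a => q a / distOf p X a]
    refine (Finset.sum_le_sum fun a _ => ?_).trans hq1
    rcases eq_or_ne (distOf p X a) 0 with h | h
    · simp [h, hq a]
    · rw [mul_div_cancel₀ _ h]
  refine (Finset.sum_le_sum fun ω _ => hterm ω).trans ?_
  rw [← Finset.sum_div, Finset.sum_sub_distrib, hsum]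
  exact div_nonpos_of_nonpos_of_nonneg (by linarith) (Real.log_pos one_lt_two).le

/-- Fano's inequality, with the binary entropy of the error probability bounded by `1`. -/
lemma condH_le_one_add_error_mul_logb (hp : ∀ ω, 0 ≤ p ω) (hsum : ∑ ω, p ω = 1)
    {α ζ : Type*} [Fintype α] [Fintype ζ] (hcard : 2 ≤ Fintype.card α)
    (A : Ω → α) (Z : Ω → ζ) (g : ζ → α) :
    condH p A Z ≤
      1 + pr p (fun ω => g (Z ω) ≠ A ω) * Real.logb 2 ((Fintype.card α : ℝ) - 1) := by
  set m : ℝ := (Fintype.card α : ℝ) - 1 with hm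
  have hmpos : 0 < m := by
    have : (2 : ℝ) ≤ Fintype.card α := by exact_mod_cast hcard
    linarith
  set k : ζ → α → ℝ := fun z a => if g z ≠ a then (2 * m)⁻¹ else 2⁻¹ with hk
  have hkpos : ∀ z a, 0 < k z a := fun z a => by
    simp only [hk]; split_ifs <;> positivity
  have hksum : ∀ z, ∑ a, k z a = 1 := fun z => by
    have hk' : ∀ a, k z a = (2 * m)⁻¹ + if g z = a then 2⁻¹ - (2 * m)⁻¹ else 0 := fun a => by
      by_cases h : g z = a <;> simp [hk, h]
    have hc : (Fintype.card α : ℝ) = m + 1 := by rw [hm]; ring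
    simp only [hk', Finset.sum_add_distrib, Finset.sum_const, Finset.card_univ, nsmul_eq_mul, hc,
      Finset.sum_ite_eq, Finset.mem_univ, if_true]
    field_simp
    ring
  have hklog : ∀ z a, Real.logb 2 (k z a) = -(1 + if g z ≠ a then Real.logb 2 m else 0) := by
    intro z a
    by_cases h : g z = a
    · simp [hk, h, Real.logb_inv]
    · simp only [hk, ne_eq, h, not_false_eq_true, if_true]
      rw [Real.logb_inv, Real.logb_mul two_ne_zero hmpos.ne', Real.logb_self_eq_one one_lt_two]
  have hgibbs := H_le_cross_entropy hp hsum (fun ω => (A ω, Z ω))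
    (fun x => distOf p Z x.2 * k x.2 x.1)
    (fun x => mul_nonneg (distOf_nonneg hp Z _) (hkpos _ _).le)
    (by
      rw [Fintype.sum_prod_type_right]
      simp only [← Finset.mul_sum, hksum, mul_one]
      rw [sum_distOf, hsum])
    (fun ω h => mul_pos (distOf_self_pos hp Z h) (hkpos _ _))
  have hsplit : ∀ ω, p ω * Real.logb 2 (distOf p Z (Z ω) * k (Z ω) (A ω)) =
      p ω * Real.logb 2 (distOf p Z (Z ω)) - p ω -
        (if g (Z ω) ≠ A ω then p ω else 0) * Real.logb 2 m := by
    intro ω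
    rcases (hp ω).eq_or_lt with h | h
    · simp [← h]
    · rw [Real.logb_mul (distOf_self_pos hp Z h).ne' (hkpos _ _).ne', hklog]
      split_ifs <;> ring
  have herr : ∑ ω, (if g (Z ω) ≠ A ω then p ω else 0) = pr p (fun ω => g (Z ω) ≠ A ω) := by
    unfold pr
    congr!
  simp only [hsplit, Finset.sum_sub_distrib, ← Finset.sum_mul, hsum, herr] at hgibbs
  rw [condH, H_eq_neg_sum Z]
  linarith

end InfoQA

/-- Uniform-distribution accuracy bound: if `β > 0` and `log₂(|𝒜| − 1) ≤ β`, then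
`Acc ≤ min{1, (C + 1) / β}` where `β = H(A | W)` and `C = H(Y | W)`. -/
theorem uniform_accuracy_bound
    {Ω 𝒜 𝒴 𝒲 : Type*} [Fintype Ω] [Fintype 𝒜] [Fintype 𝒴] [Fintype 𝒲]
    (p : Ω → ℝ) (hp : ∀ ω, 0 ≤ p ω) (hsum : ∑ ω, p ω = 1)
    (hcard : 2 ≤ Fintype.card 𝒜)
    (A : Ω → 𝒜) (Y : Ω → 𝒴) (W : Ω → 𝒲) (g : 𝒴 → 𝒜)
    (hβpos : 0 < condH p A W)
    (hlog : Real.logb 2 ((Fintype.card 𝒜 : ℝ) - 1) ≤ condH p A W) :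
    1 - pr p (fun ω => g (Y ω) ≠ A ω) ≤
      min 1 ((condH p Y W + 1) / condH p A W) := by
  have herr := pr_nonneg hp (fun ω => g (Y ω) ≠ A ω)
  refine le_min (by linarith) ?_
  rw [le_div_iff₀ hβpos]
  have hfano := condH_le_one_add_error_mul_logb hp hsum hcard A (fun ω => (Y ω, W ω))
    (fun z => g z.1)
  have hmono := H_comp_le hp (fun ω => (A ω, (Y ω, W ω))) (fun x => (x.1, x.2.2))
  have hscale := mul_le_mul_of_nonneg_left hlog herr
  simp only [condH] at hfano hmono hscale ⊢
  linarith
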